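/- arXiv:2605.22450 — 2 statements merged into one kernel-verified Lean document; each statement's English description precedes it below -/
import Mathlib

section
/- Let ψ : 𝒟 → ℝ^n be a Lipschitz map defined on a set 𝒟 ⊆ ℝ^m, and let Γ := {(x, ψ(x)) : x ∈ 𝒟} ⊆ ℝ^m × ℝ^n be its graph. Assume Γ satisfies the Fubini property along the horizontal direction, i.e. dim_H(Γ) = dim_H(π_Y(Γ)) + ess-sup^α_{y ∈ ℝ^n} dim_H(π_Y^{-1}(y) ∩ Γ), where π_Y : ℝ^m × ℝ^n → ℝ^n is the coordinate projection and α = dim_H(π_Y(Γ)). Then dim_H(𝒟) = dim_H(ψ(𝒟)) + ess-sup^α_{y ∈ ℝ^n} dim_H(ψ^{-1}(y) ∩ 𝒟). -/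
/-!
The first projection is Lipschitz and `x ↦ (x, ψ x)` is Lipschitz on `D`, so passing to
the graph preserves the Hausdorff dimension of every subset of `D` (`dimH_graphMap_image`).
Applied to `D` itself and to each fiber `ψ⁻¹(y) ∩ D`, this identifies every term of the Fubini
identity for the graph with the corresponding term of the identity for `ψ`.
-/

open MeasureTheory Set
open scoped ENNReal

noncomputable section

/-- `ess-sup^β_x f(x) = sup {q ≥ 0 : H^β({x : f(x) > q}) > 0}` (with `sup ∅ = 0`). -/
def essSupAt {X : Type*} [EMetricSpace X] [MeasurableSpace X] [BorelSpace X]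
    (β : ℝ) (f : X → ℝ≥0∞) : ℝ≥0∞ :=
  sSup {q : ℝ≥0∞ | 0 < μH[β] {x : X | q < f x}}

open scoped Classical in
/-- The essential supremum `ess-sup^α_x f(x)` relative to a base set with `α = dim_H base`:
it is `essSupAt α f` when `H^α(base) > 0`, and the limit (over `ε → 0⁺`, computed as the infimum
of the monotone family) of `essSupAt (α - ε) f` when `H^α(base) = 0`. -/
def essSupDim {X : Type*} [EMetricSpace X] [MeasurableSpace X] [BorelSpace X]
    (base : Set X) (f : X → ℝ≥0∞) : ℝ≥0∞ :=
  if 0 < μH[(dimH base).toReal] base then essSupAt (dimH base).toReal f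
  else ⨅ (ε : ℝ) (_ : 0 < ε), essSupAt ((dimH base).toReal - ε) f

/-- The graph `Γ = {(x, ψ(x)) : x ∈ 𝒟}` of a map `ψ` restricted to `𝒟`. -/
def graphOnSet {m n : ℕ} (ψ : EuclideanSpace ℝ (Fin m) → EuclideanSpace ℝ (Fin n))
    (D : Set (EuclideanSpace ℝ (Fin m))) :
    Set (EuclideanSpace ℝ (Fin m) × EuclideanSpace ℝ (Fin n)) :=
  {p | p.1 ∈ D ∧ p.2 = ψ p.1}

/-- The first projection is a Lipschitz inverse of `x ↦ (x, ψ x)`, so this map is bi-Lipschitz onto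
its image wherever `ψ` is Lipschitz. -/
lemma dimH_graphMap_image {X Y : Type*} [EMetricSpace X] [EMetricSpace Y] {ψ : X → Y} {K : NNReal}
    {S : Set X} (h : LipschitzOnWith K ψ S) :
    dimH ((fun x => (x, ψ x)) '' S) = dimH S := by
  apply le_antisymm
  · exact ((LipschitzWith.id.lipschitzOnWith (s := S)).prodMk h).dimH_image_le
  · have := (LipschitzWith.prod_fst (α := X) (β := Y)).dimH_image_le ((fun x => (x, ψ x)) '' S)
    simpa [image_image] using this

/-- **Lemma.** If `ψ : 𝒟 ⊆ ℝ^m → ℝ^n` is Lipschitz and its graph `Γ` satisfies the Fubini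
property along the horizontal direction `π_Y`, then
`dim_H 𝒟 = dim_H ψ(𝒟) + ess-sup^α_y dim_H (ψ⁻¹(y) ∩ 𝒟)` where `α = dim_H ψ(𝒟)`. -/
theorem fubini_of_lipschitz_graph
    (m n : ℕ) (D : Set (EuclideanSpace ℝ (Fin m)))
    (ψ : EuclideanSpace ℝ (Fin m) → EuclideanSpace ℝ (Fin n))
    (K : NNReal) (hLip : LipschitzOnWith K ψ D)
    (hFub : dimH (graphOnSet ψ D) = dimH (Prod.snd '' graphOnSet ψ D) +
      essSupDim (Prod.snd '' graphOnSet ψ D)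
        (fun y => dimH {p : EuclideanSpace ℝ (Fin m) × EuclideanSpace ℝ (Fin n) |
          p ∈ graphOnSet ψ D ∧ p.2 = y})) :
    dimH D = dimH (ψ '' D) +
      essSupDim (ψ '' D) (fun y => dimH {x | x ∈ D ∧ ψ x = y}) := by
  have hgraph : graphOnSet ψ D = (fun x => (x, ψ x)) '' D := by
    ext ⟨x, y⟩
    simp [graphOnSet, eq_comm]
  have hsnd : Prod.snd '' graphOnSet ψ D = ψ '' D := by
    rw [hgraph, image_image]
  have hfib (y : EuclideanSpace ℝ (Fin n)) :
      dimH {p : EuclideanSpace ℝ (Fin m) × EuclideanSpace ℝ (Fin n) |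
        p ∈ graphOnSet ψ D ∧ p.2 = y} = dimH {x | x ∈ D ∧ ψ x = y} := by
    have hsub : {x | x ∈ D ∧ ψ x = y} ⊆ D := fun x hx => hx.1
    rw [← dimH_graphMap_image (hLip.mono hsub)]
    congr 1
    ext ⟨x, z⟩
    simp only [graphOnSet, mem_ofPred_eq, mem_image, Prod.mk.injEq]
    constructor
    · rintro ⟨⟨hx, rfl⟩, hy⟩
      exact ⟨x, ⟨hx, hy⟩, rfl, rfl⟩
    · rintro ⟨x, ⟨hx, hy⟩, rfl, rfl⟩
      exact ⟨⟨hx, rfl⟩, hy⟩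
  rw [hsnd, hgraph, dimH_graphMap_image hLip, ← hgraph] at hFub
  simpa only [hfib] using hFub

end
end

section
/- For every nonempty set B ⊆ ℝ^m × ℝ^n, one has dim_H(π_X(B)) + ess-sup^α_{x ∈ ℝ^m} dim_H(π_X^{-1}(x) ∩ B) ≤ dim_H(B), where π_X : ℝ^m × ℝ^n → ℝ^m is the coordinate projection and α = dim_H(π_X(B)). -/
/-!
The heart of the matter is `dimH_base_add_le`: if `π : Z → X` is `1`-Lipschitz and each fiber of `B`
over `A` has dimension greater than `q`, then `dim A + q ≤ dim B`, for arbitrary sets `A` and `B`.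
Applied to the superlevel sets `A = {x | q < dim B_x}`, which have dimension at least `β` as soon as
their `β`-dimensional measure is positive, it bounds `β + essSupAt β` by `dim B`
(`add_essSupAt_le`); the theorem follows with `β = α` or by letting `β` increase to `α`.

To prove the inequality, suppose `dim B < u < s + t` with `s < dim A` and `t < q`. By countable
subadditivity one may shrink `A` and assume that for some `r₀ > 0` every cover of every fiber over
`A` by sets of diameter at most `r₀` satisfies `∑ diam ^ t ≥ 1`. Take a cover `E` of `B` with
`∑ diam (E i) ^ u` small. Each `x ∈ A` satisfies `∑ diam (E i) ^ t ≥ 1`, the sum being over the `i`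
with `x ∈ π (E i)`. Because there is room between `u` and `s + t`, a geometric series allows one
to choose a single dyadic scale `k`, depending on `x`, whose sets contribute at least
`c 2 ^ (-ε k)`, where `ε = s + t - u`. At each scale a maximal separated set of such points is counted
by the sets `E i` of that scale (`exists_cover_base`). The balls around these points cover `A` with
`∑ diam ^ s` bounded by a constant times `∑ diam (E i) ^ u`. So `A` is null for the exponent `s`
(`hausdorffMeasure_base_eq_zero`), contradicting `s < dim A`. This replaces the use of Frostman
measures, which would require measurability of `A`.
-/

open MeasureTheory Set
open scoped ENNReal

noncomputable section

/-! ### Nets and dyadic scales -/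

/-- Every set contains a `ρ`-separated `ρ`-net, obtained by maximality. -/
theorem exists_maximal_separated {X : Type*} [EMetricSpace X] (S : Set X) (ρ : ℝ≥0∞) :
    ∃ N ⊆ S, N.Pairwise (fun x y => ρ < edist x y) ∧ ∀ x ∈ S, ∃ y ∈ N, edist x y ≤ ρ := by
  obtain ⟨N, hN⟩ := zorn_subset {N : Set X | N ⊆ S ∧ N.Pairwise (fun x y => ρ < edist x y)} (by
    intro C hC hchain
    refine ⟨⋃₀ C, ⟨sUnion_subset fun t ht => (hC ht).1, ?_⟩, fun t ht => subset_sUnion_of_mem ht⟩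
    exact (pairwise_sUnion hchain.directedOn).2 fun t ht => (hC ht).2)
  refine ⟨N, hN.prop.1, hN.prop.2, fun x hx => ?_⟩
  by_contra! h
  have hins : insert x N ⊆ S ∧ (insert x N).Pairwise (fun x y => ρ < edist x y) := by
    refine ⟨insert_subset hx hN.prop.1, hN.prop.2.insert fun y hy _ => ⟨h y hy, ?_⟩⟩
    rw [edist_comm]; exact h y hy
  have hxN : x ∈ N := hN.le_of_ge hins (subset_insert x N) (mem_insert x N)
  have := h x hxN
  simp at this

/-- A set of diameter `d ≈ ρ` contributes `d ^ t` to the weight of a point; trading the factor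
`ρ ^ s` for `d ^ s` costs a constant, and the loss `ρ ^ ε` comes from lowering the exponent by `ε`. -/
theorem scale_ineq {s t ε : ℝ} (hs : 0 < s) (hε : 0 < ε) {d ρ : ℝ≥0∞}
    (hd0 : d ≠ 0) (hd1 : d ≠ ∞) (hdρ : d ≤ ρ) (hρd : ρ ≤ 2 * d) :
    (2 * ρ) ^ s * d ^ t ≤ 4 ^ s * (ρ ^ ε * d ^ (s + t - ε)) := by
  calc (2 * ρ) ^ s * d ^ t ≤ (4 * d) ^ s * d ^ t := by
        have h : 2 * ρ ≤ 4 * d := by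
          calc 2 * ρ ≤ 2 * (2 * d) := by gcongr
            _ = 4 * d := by rw [← mul_assoc]; norm_num
        exact mul_le_mul_left (ENNReal.rpow_le_rpow h hs.le) _
    _ = 4 ^ s * (d ^ ε * d ^ (s + t - ε)) := by
        rw [ENNReal.mul_rpow_of_nonneg _ _ hs.le, mul_assoc, ← ENNReal.rpow_add _ _ hd0 hd1,
          ← ENNReal.rpow_add _ _ hd0 hd1]
        congr 2; ring
    _ ≤ _ := by gcongr

/-- The dyadic scale of a diameter `0 < d ≤ 1`: up to a factor `2`, `d` is `2⁻¹ ^ k`. -/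
theorem exists_scale {d : ℝ≥0∞} (h0 : d ≠ 0) (h1 : d ≤ 1) :
    ∃ k : ℕ, d ≤ 2⁻¹ ^ k ∧ 2⁻¹ ^ k ≤ 2 * d := by
  lift d to NNReal using (h1.trans_lt ENNReal.one_lt_top).ne
  have h0' : (0 : ℝ) < d := by exact_mod_cast pos_iff_ne_zero.2 h0
  have h1' : (d : ℝ) ≤ 1 := by exact_mod_cast h1
  obtain ⟨k, hk1, hk2⟩ := exists_nat_pow_near_of_lt_one h0' h1' (y := 2⁻¹) (by norm_num)
    (by norm_num)
  have e : (2⁻¹ : ℝ≥0∞) ^ k = (((2⁻¹ : NNReal) ^ k : NNReal) : ℝ≥0∞) := by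
    rw [ENNReal.coe_pow, ENNReal.coe_inv (by norm_num)]; rfl
  refine ⟨k, ?_, ?_⟩
  · rw [e]; exact_mod_cast hk2
  · rw [e]
    have : ((2⁻¹ : ℝ) ^ k) ≤ 2 * d := by rw [pow_succ] at hk1; linarith
    exact_mod_cast this

/-! ### From covers of `B` to covers of `A` -/

open scoped Classical in
open Metric in
/-- The core of the argument: a cover `E` of `B` by small sets yields a cover of `A` by balls.

The weight of `x` at scale `k` is the sum of `diam (E i) ^ t` over the sets of scale `k` whose
projection contains `x`. Over all scales the weights of `x ∈ A` add up to at least `1`, so the weight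
at some scale `k` is at least `c * 2 ^ (-ε k)`. For each `k`, `N k` is a maximal `2 ^ (-k)`-separated
set of points with this property. Since the projection of a set of scale `k` contains at most one
point of `N k`, the number of points of `N k` is controlled by the sum of `diam (E i) ^ t` over the
sets of scale `k`. -/
theorem exists_cover_base {X Z : Type*} [EMetricSpace X] [EMetricSpace Z] {π : Z → X}
    (hπ : LipschitzWith 1 π) {A : Set X} {B : Set Z} {s t ε : ℝ} (hs : 0 < s) (ht : 0 < t)
    (hε : 0 < ε) {c : ℝ≥0∞} (hc : c * (1 - 2⁻¹ ^ ε)⁻¹ < 1) (hc0 : c ≠ 0)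
    {δ : ℝ≥0∞} (hδ : δ ≤ 1)
    (hA : ∀ x ∈ A, ∀ E : ℕ → Set Z, (∀ i, ediam (E i) ≤ δ) → {p | p ∈ B ∧ π p = x} ⊆ ⋃ i, E i →
      1 ≤ ∑' i, ediam (E i) ^ t)
    (E : ℕ → Set Z) (hE : ∀ i, ediam (E i) ≤ δ) (hBE : B ⊆ ⋃ i, E i) :
    ∃ N : ℕ → Set X, (∀ k, (N k).Countable) ∧
      A ⊆ ⋃ p : Σ k, N k, closedEBall (p.2 : X) (2⁻¹ ^ p.1) ∧
      (∀ k, (N k).Nonempty → 2⁻¹ ^ k ≤ 2 * δ) ∧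
      c * ∑' p : Σ k, N k, (2 * 2⁻¹ ^ p.1 : ℝ≥0∞) ^ s ≤
        4 ^ s * ∑' i, ediam (E i) ^ (s + t - ε) := by
  set d : ℕ → ℝ≥0∞ := fun i => ediam (E i) with hd
  have hκ : ∀ i, ∃ k : ℕ, d i ≠ 0 → d i ≤ 2⁻¹ ^ k ∧ 2⁻¹ ^ k ≤ 2 * d i := by
    intro i
    by_cases h : d i = 0
    · exact ⟨0, fun h' => (h' h).elim⟩
    · obtain ⟨k, hk⟩ := exists_scale h ((hE i).trans hδ)
      exact ⟨k, fun _ => hk⟩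
  choose κ hκ using hκ
  set w : ℕ → X → ℝ≥0∞ := fun k x =>
    ∑' i, if κ i = k then (if x ∈ π '' E i then d i ^ t else 0) else 0 with hw
  -- The sets `E i` meeting the fiber over `x` cover it, so the lower bound on covers applies to them.
  have hw1 : ∀ x ∈ A, 1 ≤ ∑' k, w k x := by
    intro x hx
    have h1 := hA x hx (fun i => if x ∈ π '' E i then E i else ∅) (by
      intro i
      split_ifs
      · exact hE i
      · simp) (by
      rintro p ⟨hp, rfl⟩
      obtain ⟨i, hi⟩ := mem_iUnion.1 (hBE hp)
      refine mem_iUnion.2 ⟨i, ?_⟩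
      rw [if_pos (mem_image_of_mem π hi)]
      exact hi)
    refine h1.trans_eq ?_
    simp only [hw]
    rw [ENNReal.tsum_comm]
    refine tsum_congr fun i => ?_
    rw [tsum_ite_eq']
    split_ifs <;> simp [ht, hd]
  have hscale : ∀ x ∈ A, ∃ k : ℕ, c * (2⁻¹ ^ ε) ^ k ≤ w k x := by
    intro x hx
    by_contra! h
    have h2 : ∑' k, w k x ≤ c * (1 - 2⁻¹ ^ ε)⁻¹ := by
      rw [← ENNReal.tsum_geometric, ← ENNReal.tsum_mul_left]
      exact ENNReal.tsum_le_tsum fun k => (h k).le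
    exact absurd ((hw1 x hx).trans h2) (not_le.2 hc)
  have hr0 : ∀ k : ℕ, ((2⁻¹ : ℝ≥0∞) ^ ε) ^ k ≠ 0 := fun k => pow_ne_zero _ (by simp)
  have hrt : ∀ k : ℕ, ((2⁻¹ : ℝ≥0∞) ^ ε) ^ k ≠ ∞ := fun k => ENNReal.pow_ne_top (by simp)
  choose N hNS hNsep hNcov using fun k : ℕ =>
    exists_maximal_separated {x | x ∈ A ∧ c * (2⁻¹ ^ ε) ^ k ≤ w k x} (2⁻¹ ^ k)
  have hwit : ∀ k, ∀ x ∈ N k, ∃ i, κ i = k ∧ x ∈ π '' E i ∧ d i ≠ 0 := by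
    intro k x hx
    have hpos : w k x ≠ 0 := by
      intro h0
      have := (hNS k hx).2
      rw [h0] at this
      exact mul_ne_zero hc0 (hr0 k) (le_zero_iff.1 this)
    rw [hw] at hpos
    simp only [ne_eq, ENNReal.tsum_eq_zero, not_forall] at hpos
    obtain ⟨i, hi⟩ := hpos
    refine ⟨i, ?_⟩
    by_cases h1 : κ i = k <;> by_cases h2 : x ∈ π '' E i <;> by_cases h3 : d i = 0 <;>
      simp_all
  -- Net points of scale `k` are farther apart than the projection of a set of that scale is wide.
  have huniq : ∀ k i, κ i = k → d i ≠ 0 → ∀ x ∈ N k, ∀ y ∈ N k, x ∈ π '' E i → y ∈ π '' E i →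
      x = y := by
    rintro k i rfl h0 x hx y hy hxi hyi
    by_contra hne
    have h1 := hNsep (κ i) hx hy hne
    have h2 : edist x y ≤ d i := by
      refine (edist_le_ediam_of_mem hxi hyi).trans ?_
      simpa using hπ.ediam_image_le (E i)
    exact absurd (h1.trans_le (h2.trans (hκ i h0).1)) (lt_irrefl _)
  refine ⟨N, fun k => ?_, fun x hx => ?_, fun k ⟨x, hx⟩ => ?_, ?_⟩
  · choose! f hf using hwit k
    refine (MapsTo.countable_of_injOn (f := f) (t := univ) (fun _ _ => mem_univ _) ?_
      countable_univ)
    intro x hx y hy hxy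
    refine huniq k (f x) (hf x hx).1 (hf x hx).2.2 x hx y hy (hf x hx).2.1 ?_
    rw [hxy]; exact (hf y hy).2.1
  · obtain ⟨k, hk⟩ := hscale x hx
    obtain ⟨y, hy, hxy⟩ := hNcov k x ⟨hx, hk⟩
    exact mem_iUnion.2 ⟨⟨k, y, hy⟩, hxy⟩
  · obtain ⟨i, rfl, -, hi⟩ := hwit k x hx
    refine (hκ i hi).2.trans ?_
    gcongr
    exact hE i
  · have hstep : ∀ k : ℕ, c * ∑' _ : N k, (2 * 2⁻¹ ^ k : ℝ≥0∞) ^ s ≤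
        4 ^ s * ∑' i, if κ i = k then d i ^ (s + t - ε) else 0 := by
      intro k
      rw [← ENNReal.mul_le_mul_iff_right (hr0 k) (hrt k)]
      calc ((2⁻¹ : ℝ≥0∞) ^ ε) ^ k * (c * ∑' _ : N k, (2 * 2⁻¹ ^ k : ℝ≥0∞) ^ s)
          = ∑' _ : N k, (2 * 2⁻¹ ^ k : ℝ≥0∞) ^ s * (c * (2⁻¹ ^ ε) ^ k) := by
            rw [ENNReal.tsum_mul_right]; ring
        _ ≤ ∑' x : N k, (2 * 2⁻¹ ^ k : ℝ≥0∞) ^ s * w k x :=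
            ENNReal.tsum_le_tsum fun x => by gcongr; exact (hNS k x.2).2
        _ = ∑' i, (2 * 2⁻¹ ^ k : ℝ≥0∞) ^ s * ∑' x : N k,
              if κ i = k then (if (x : X) ∈ π '' E i then d i ^ t else 0) else 0 := by
            rw [ENNReal.tsum_mul_left, ENNReal.tsum_mul_left, ENNReal.tsum_comm]
        _ ≤ ∑' i, 4 ^ s * ((2⁻¹ ^ ε) ^ k * if κ i = k then d i ^ (s + t - ε) else 0) := by
            refine ENNReal.tsum_le_tsum fun i => ?_
            by_cases hik : κ i = k
            swap
            · simp [hik]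
            by_cases h0 : d i = 0
            · simp [h0, ht]
            simp only [hik, if_true]
            have hle : (∑' x : N k, if (x : X) ∈ π '' E i then d i ^ t else 0) ≤ d i ^ t := by
              by_cases hex : ∃ x : N k, (x : X) ∈ π '' E i
              · obtain ⟨x, hx⟩ := hex
                rw [tsum_eq_single x, if_pos hx]
                intro y hyx
                refine if_neg fun hy => hyx ?_
                exact Subtype.ext (huniq k i hik h0 y y.2 x x.2 hy hx)
              · push Not at hex
                simp [hex]
            have hpow : ((2⁻¹ : ℝ≥0∞) ^ ε) ^ k = (2⁻¹ ^ k) ^ ε := by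
              rw [← ENNReal.rpow_natCast, ← ENNReal.rpow_natCast, ← ENNReal.rpow_mul,
                ← ENNReal.rpow_mul, mul_comm]
            rw [hpow]
            have := hκ i h0
            rw [hik] at this
            refine le_trans (by gcongr) (scale_ineq hs hε h0 ?_ this.1 this.2)
            exact (((hE i).trans hδ).trans_lt ENNReal.one_lt_top).ne
        _ = _ := by
            rw [ENNReal.tsum_mul_left, ENNReal.tsum_mul_left]; ring
    rw [ENNReal.tsum_sigma', ← ENNReal.tsum_mul_left]
    refine (ENNReal.tsum_le_tsum hstep).trans_eq ?_
    rw [ENNReal.tsum_mul_left, ENNReal.tsum_comm]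
    congr 1
    exact tsum_congr fun i => by rw [tsum_ite_eq']

open Metric in
theorem iSup_nonempty_ediam_rpow {Z : Type*} [EMetricSpace Z] (E : Set Z) {u : ℝ} (hu : 0 < u) :
    (⨆ _ : E.Nonempty, ediam E ^ u) = ediam E ^ u := by
  rcases E.eq_empty_or_nonempty with rfl | h
  · simp [hu]
  · simp [h]

open Metric Filter Topology in
/-- If every cover of every fiber over `A` by sets of diameter at most `r₀` has `t`-cost at least
`1`, and `B` is null for an exponent `u < s + t`, then `A` is null for the exponent `s`. -/
theorem hausdorffMeasure_base_eq_zero {X Z : Type*} [EMetricSpace X] [EMetricSpace Z]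
    [MeasurableSpace X] [BorelSpace X] [MeasurableSpace Z] [BorelSpace Z] {π : Z → X}
    (hπ : LipschitzWith 1 π) {A : Set X} {B : Set Z} {s t u : ℝ} (hs : 0 < s) (ht : 0 < t)
    (hu : 0 < u) (hust : u < s + t) {r₀ : ℝ≥0∞} (hr₀ : 0 < r₀)
    (hA : ∀ x ∈ A, ∀ E : ℕ → Set Z, (∀ i, ediam (E i) ≤ r₀) → {p | p ∈ B ∧ π p = x} ⊆ ⋃ i, E i →
      1 ≤ ∑' i, ediam (E i) ^ t)
    (hB : μH[u] B = 0) : μH[s] A = 0 := by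
  obtain ⟨ε, hε, rfl⟩ : ∃ ε : ℝ, 0 < ε ∧ u = s + t - ε := ⟨s + t - u, by linarith, by ring⟩
  have hr1 : (2⁻¹ : ℝ≥0∞) ^ ε < 1 :=
    ENNReal.rpow_lt_one (ENNReal.inv_lt_one.2 ENNReal.one_lt_two) hε
  have h10 : 1 - (2⁻¹ : ℝ≥0∞) ^ ε ≠ 0 := (tsub_pos_of_lt hr1).ne'
  have h1t : 1 - (2⁻¹ : ℝ≥0∞) ^ ε ≠ ∞ := ENNReal.sub_ne_top ENNReal.one_ne_top
  obtain ⟨c, hc0, hct, hc⟩ : ∃ c : ℝ≥0∞, c ≠ 0 ∧ c ≠ ∞ ∧ c * (1 - 2⁻¹ ^ ε)⁻¹ < 1 := by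
    refine ⟨2⁻¹ * (1 - 2⁻¹ ^ ε), mul_ne_zero (by simp) h10, ENNReal.mul_ne_top (by simp) h1t, ?_⟩
    rw [mul_assoc, ENNReal.mul_inv_cancel h10 h1t, mul_one]
    exact ENNReal.inv_lt_one.2 ENNReal.one_lt_two
  have hkey : ∀ n : ℕ, ∃ N : ℕ → Set X, (∀ k, (N k).Countable) ∧
      A ⊆ ⋃ p : Σ k, N k, closedEBall (p.2 : X) (2⁻¹ ^ p.1) ∧
      (∀ k, (N k).Nonempty → 2⁻¹ ^ k ≤ 2 * (n : ℝ≥0∞)⁻¹) ∧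
      c * ∑' p : Σ k, N k, (2 * 2⁻¹ ^ p.1 : ℝ≥0∞) ^ s ≤ 4 ^ s * (n : ℝ≥0∞)⁻¹ := by
    intro n
    have hn : (0 : ℝ≥0∞) < (n : ℝ≥0∞)⁻¹ := by simp
    obtain ⟨δ, hδ0, hδ1, hδr, hδn⟩ : ∃ δ : ℝ≥0∞, 0 < δ ∧ δ ≤ 1 ∧ δ ≤ r₀ ∧ δ ≤ (n : ℝ≥0∞)⁻¹ :=
      ⟨min 1 (min r₀ (n : ℝ≥0∞)⁻¹), lt_min one_pos (lt_min hr₀ hn), min_le_left _ _,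
        (min_le_right _ _).trans (min_le_left _ _), (min_le_right _ _).trans (min_le_right _ _)⟩
    rw [Measure.hausdorffMeasure_apply] at hB
    have hlt := (le_iSup₂ (f := fun (r : ℝ≥0∞) (_ : 0 < r) =>
      ⨅ (E : ℕ → Set Z) (_ : B ⊆ ⋃ n, E n) (_ : ∀ n, ediam (E n) ≤ r),
          ∑' n, ⨆ _ : (E n).Nonempty, ediam (E n) ^ (s + t - ε)) δ hδ0).trans_lt (hB.trans_lt hn)
    simp only [iInf_lt_iff, iSup_nonempty_ediam_rpow _ hu] at hlt
    obtain ⟨E, hBE, hE, hsum⟩ := hlt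
    obtain ⟨N, h1, h2, h3, h4⟩ := exists_cover_base hπ hs ht hε hc hc0 hδ1
      (fun x hx E hE => hA x hx E fun i => (hE i).trans hδr) E hE hBE
    exact ⟨N, h1, h2, fun k hk => (h3 k hk).trans (by gcongr), h4.trans (by gcongr)⟩
  choose N hNc hNA hNr hNs using hkey
  have hcount : ∀ n, Countable (Σ k, N n k) := fun n => by
    have := fun k => (hNc n k).to_subtype
    infer_instance
  have hlim : ∀ a : ℝ≥0∞, a ≠ ∞ → Tendsto (fun n : ℕ => a * (n : ℝ≥0∞)⁻¹) atTop (𝓝 0) := by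
    intro a ha
    simpa using ENNReal.Tendsto.const_mul ENNReal.tendsto_inv_nat_nhds_zero (Or.inr ha)
  have hle := Measure.hausdorffMeasure_le_liminf_tsum s A (l := atTop)
    (fun n : ℕ => 4 * (n : ℝ≥0∞)⁻¹) (hlim 4 (by simp))
    (fun n (p : Σ k, N n k) => closedEBall (p.2 : X) (2⁻¹ ^ p.1))
    (Eventually.of_forall fun n p => by
      calc ediam (closedEBall (p.2 : X) (2⁻¹ ^ p.1)) ≤ 2 * 2⁻¹ ^ p.1 := ediam_closedEBall_le
        _ ≤ 2 * (2 * (n : ℝ≥0∞)⁻¹) := by gcongr; exact hNr n p.1 ⟨_, p.2.2⟩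
        _ = 4 * (n : ℝ≥0∞)⁻¹ := by rw [← mul_assoc]; norm_num)
    (Eventually.of_forall hNA)
  refine le_antisymm (hle.trans ?_) bot_le
  have hb : ∀ n : ℕ, ∑' p : Σ k, N n k, ediam (closedEBall (p.2 : X) (2⁻¹ ^ p.1)) ^ s ≤
      (c⁻¹ * 4 ^ s) * (n : ℝ≥0∞)⁻¹ := by
    intro n
    have h1 : ∑' p : Σ k, N n k, (2 * 2⁻¹ ^ p.1 : ℝ≥0∞) ^ s ≤ c⁻¹ * (4 ^ s * (n : ℝ≥0∞)⁻¹) :=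
      (ENNReal.mul_le_iff_le_inv hc0 hct).1 (hNs n)
    rw [mul_assoc]
    refine le_trans (ENNReal.tsum_le_tsum fun p => ?_) h1
    exact ENNReal.rpow_le_rpow ediam_closedEBall_le hs.le
  refine (liminf_le_liminf (Eventually.of_forall hb)).trans_eq ?_
  exact (hlim _ (ENNReal.mul_ne_top (ENNReal.inv_ne_top.2 hc0)
    (ENNReal.rpow_ne_top_of_nonneg hs.le (by simp)))).liminf_eq

/-! ### The dimension inequality -/

open Metric in
/-- If all fibers of `B` over `A` have dimension greater than `q`, then `dim A + q ≤ dim B`. No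
measurability is assumed. -/
theorem dimH_base_add_le {X Z : Type*} [EMetricSpace X] [EMetricSpace Z] {π : Z → X}
    (hπ : LipschitzWith 1 π) {A : Set X} (hAne : A.Nonempty) {B : Set Z} {q : ℝ≥0∞}
    (hq : ∀ x ∈ A, q < dimH {p | p ∈ B ∧ π p = x}) : dimH A + q ≤ dimH B := by
  borelize X Z
  obtain ⟨x₀, hx₀⟩ := hAne
  have hqB : q ≤ dimH B := (hq x₀ hx₀).le.trans (dimH_mono fun p hp => hp.1)
  have hAB : dimH A ≤ dimH B := by
    refine (dimH_mono fun x hx => ?_).trans (hπ.dimH_image_le B)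
    rcases eq_empty_or_nonempty {p | p ∈ B ∧ π p = x} with h | ⟨p, hp, rfl⟩
    · have := hq x hx
      simp [h] at this
    · exact mem_image_of_mem π hp
  refine ENNReal.le_of_forall_nnreal_lt fun a ha => ?_
  by_contra! hlt
  rcases eq_or_ne q 0 with rfl | hq0
  · rw [add_zero] at ha; exact absurd (ha.trans_le hAB) hlt.not_gt
  rcases eq_or_ne (dimH A) 0 with hA0 | hA0
  · rw [hA0, zero_add] at ha; exact absurd (ha.trans_le hqB) hlt.not_gt
  obtain ⟨s', hs', t', ht', hat⟩ := ENNReal.exists_lt_add_of_lt_add ha hA0 hq0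
  obtain ⟨s, hs_lt, hsA⟩ := ENNReal.lt_iff_exists_nnreal_btwn.1 hs'
  obtain ⟨t, ht_lt, htq⟩ := ENNReal.lt_iff_exists_nnreal_btwn.1 ht'
  have hs : (0 : ℝ) < s := by exact_mod_cast pos_of_gt hs_lt
  have ht : (0 : ℝ) < t := by exact_mod_cast pos_of_gt ht_lt
  have hu : (0 : ℝ) < a := by exact_mod_cast pos_of_gt hlt
  have hust : (a : ℝ) < s + t := by
    exact_mod_cast hat.trans (ENNReal.add_lt_add hs_lt ht_lt)
  -- `A` is exhausted by the sets on which the fibers are uniformly large at scale `1 / k`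
  set S : ℕ → Set X := fun k => {x | x ∈ A ∧ ∀ E : ℕ → Set Z, (∀ i, ediam (E i) ≤ (k : ℝ≥0∞)⁻¹) →
    {p | p ∈ B ∧ π p = x} ⊆ ⋃ i, E i → 1 ≤ ∑' i, ediam (E i) ^ (t : ℝ)} with hS
  have hAS : A ⊆ ⋃ k, S k := by
    intro x hx
    have hinf : (1 : ℝ≥0∞) < μH[(t : ℝ)] {p | p ∈ B ∧ π p = x} := by
      rw [hausdorffMeasure_of_lt_dimH (htq.trans (hq x hx))]
      exact ENNReal.one_lt_top
    rw [Measure.hausdorffMeasure_apply] at hinf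
    simp only [lt_iSup_iff, iSup_nonempty_ediam_rpow _ ht] at hinf
    obtain ⟨r, hr, h1⟩ := hinf
    obtain ⟨k, hk⟩ := ENNReal.exists_inv_nat_lt hr.ne'
    refine mem_iUnion.2 ⟨k, hx, fun E hE hcov => h1.le.trans ?_⟩
    exact iInf_le_of_le E (iInf_le_of_le hcov (iInf_le _ fun i => (hE i).trans hk.le))
  have hzero : μH[(s : ℝ)] A = 0 := by
    refine measure_mono_null hAS (measure_iUnion_null fun k => ?_)
    exact hausdorffMeasure_base_eq_zero hπ hs ht hu hust (r₀ := (k : ℝ≥0∞)⁻¹) (by simp)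
      (fun x hx => hx.2) (hausdorffMeasure_of_dimH_lt hlt)
  rw [hausdorffMeasure_of_lt_dimH hsA] at hzero
  exact ENNReal.top_ne_zero hzero

/-- The case of `dimH_base_add_le` where `A` is a superlevel set of the fiber dimension. The
hypothesis `β ≤ dim B` is what remains when the supremum defining `essSupAt` is over the empty
set. -/
theorem add_essSupAt_le {X Z : Type*} [EMetricSpace X] [MeasurableSpace X] [BorelSpace X]
    [EMetricSpace Z] {π : Z → X} (hπ : LipschitzWith 1 π) {B : Set Z} {β : ℝ} (hβ : 0 ≤ β)
    (h : ENNReal.ofReal β ≤ dimH B) :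
    ENNReal.ofReal β + essSupAt β (fun x => dimH {p | p ∈ B ∧ π p = x}) ≤ dimH B := by
  rw [essSupAt]
  rcases eq_empty_or_nonempty
    {q : ℝ≥0∞ | 0 < μH[β] {x : X | q < dimH {p | p ∈ B ∧ π p = x}}} with he | hne
  · rw [he]; simpa using h
  rw [ENNReal.add_sSup hne]
  refine iSup₂_le fun q hq => ?_
  have hA : (ENNReal.ofReal β) ≤ dimH {x : X | q < dimH {p | p ∈ B ∧ π p = x}} := by
    refine le_dimH_of_hausdorffMeasure_ne_zero ?_
    rw [Real.coe_toNNReal _ hβ]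
    exact (show 0 < μH[β] _ from hq).ne'
  have hne' : {x : X | q < dimH {p | p ∈ B ∧ π p = x}}.Nonempty :=
    nonempty_of_measure_ne_zero (show 0 < μH[β] _ from hq).ne'
  exact (add_le_add_left hA q).trans (dimH_base_add_le hπ hne' fun x hx => hx)

/-- For every nonempty `B ⊆ ℝ^m × ℝ^n`,
`dim_H (π_X(B)) + ess-sup^α_x dim_H (π_X⁻¹(x) ∩ B) ≤ dim_H B`, where `α = dim_H (π_X(B))`. -/
theorem dimH_proj_add_essSup_fiber_le
    (m n : ℕ) (B : Set (EuclideanSpace ℝ (Fin m) × EuclideanSpace ℝ (Fin n)))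
    (hB : B.Nonempty) :
    dimH (Prod.fst '' B) +
      essSupDim (Prod.fst '' B)
        (fun x => dimH {p : EuclideanSpace ℝ (Fin m) × EuclideanSpace ℝ (Fin n) |
          p ∈ B ∧ p.1 = x}) ≤ dimH B := by
  have hπ : LipschitzWith 1
      (Prod.fst : EuclideanSpace ℝ (Fin m) × EuclideanSpace ℝ (Fin n) → _) := LipschitzWith.prod_fst
  have hle := hπ.dimH_image_le B
  have htop : dimH (Prod.fst '' B) ≠ ∞ :=
    ((dimH_mono (subset_univ _)).trans_lt (by rw [Real.dimH_univ_eq_finrank]; simp)).ne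
  set α := dimH (Prod.fst '' B) with hα
  unfold essSupDim
  split_ifs with hpos
  · have h := add_essSupAt_le hπ (B := B) (β := α.toReal) ENNReal.toReal_nonneg
      (by rwa [ENNReal.ofReal_toReal htop])
    rwa [ENNReal.ofReal_toReal htop] at h
  · have hα0 : α ≠ 0 := by
      intro h0
      refine hpos ?_
      rw [← hα, h0, ENNReal.toReal_zero]
      exact one_pos.trans_le (Measure.one_le_hausdorffMeasure_zero_of_nonempty (hB.image _))
    have hα0' : 0 < α.toReal := ENNReal.toReal_pos hα0 htop
    refine ENNReal.le_of_forall_pos_le_add fun ε hε _ => ?_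
    -- shrinking `ε` to at most `α` keeps the exponent `α - ε` nonnegative
    obtain ⟨ε', hε'0, hε'ε, hε'α⟩ : ∃ ε' : ℝ, 0 < ε' ∧ ε' ≤ ε ∧ ε' ≤ α.toReal :=
      ⟨min ε α.toReal, lt_min (by exact_mod_cast hε) hα0', min_le_left _ _, min_le_right _ _⟩
    have hsub : ENNReal.ofReal (α.toReal - ε') ≤ α :=
      ENNReal.ofReal_le_of_le_toReal (by linarith)
    have h := add_essSupAt_le hπ (B := B) (β := α.toReal - ε') (by linarith) (hsub.trans hle)
    have hsplit : α = ENNReal.ofReal (α.toReal - ε') + ENNReal.ofReal ε' := by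
      rw [← ENNReal.ofReal_add (by linarith) hε'0.le, sub_add_cancel, ENNReal.ofReal_toReal htop]
    have hε'' : ENNReal.ofReal ε' ≤ ε := by
      rw [← ENNReal.ofReal_coe_nnreal]; exact ENNReal.ofReal_le_ofReal hε'ε
    calc α + ⨅ (η : ℝ) (_ : 0 < η), essSupAt (α.toReal - η) _
        ≤ α + essSupAt (α.toReal - ε') _ := by gcongr; exact iInf₂_le ε' hε'0
      _ = (ENNReal.ofReal (α.toReal - ε') + essSupAt (α.toReal - ε') _) + ENNReal.ofReal ε' := by
          nth_rewrite 1 [hsplit]; rw [add_right_comm]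
      _ ≤ dimH B + ε := add_le_add h hε''

end
end
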